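/- Let ħ > 0, let W be smooth ℤⁿ-periodic, and let w, w* : ℝⁿ × ℝⁿ → ℝ and E : ℝⁿ → ℝ be smooth, with x ↦ w(P,x) and x ↦ w*(P,x) strictly positive and ℤⁿ-periodic for each P ∈ ℝⁿ, satisfying for every P: −(ħ²/2)Δ_x w + ħ P·D_x w + W w = E(P) w, −(ħ²/2)Δ_x w* − ħ P·D_x w* + W w* = E(P) w*, and the normalization ∫ w(P,x) w*(P,x) dx = 1. Set v = −ħ log w, v* = ħ log w*, σ = w w*, u(P,x) = P·x + (v(P,x) + v*(P,x))/2, and H̄(P) = |P|²/2 − E(P). Then for every P the gradient of H̄ with respect to P satisfies ∇_P H̄(P) = ∫ σ(P,x) D_x u(P,x) dx. -/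

import Mathlib

/-!
The perturbation formula `∂E/∂P_j = ħ ∫ w* ∂_j w` drives the proof. It is obtained without
differentiating the eigenvalue equation: pairing the equation of `w(Q)` with `w*(P)` and the
adjoint equation of `w*(P)` with `w(Q)`, and using that a periodic divergence integrates to zero
over the cube (`integral_div_eq_zero`), gives the exact identity
`(E(Q) - E(P)) ∫ w(Q) w*(P) = ħ ∫ w*(P) (Q - P)·D_x w(Q)` (`eigenvalue_difference`).
With `Q = P + t e_j`, dividing by `t` and letting `t → 0` gives the formula, since the two
integrals depend continuously on `t` and `∫ w w* = 1` (`pd_eigenvalue`).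

On the other side, `σ ∂_j u = P_j σ + (ħ/2) (w ∂_j w* - w* ∂_j w)`, that is
`P_j σ - ħ w* ∂_j w + (ħ/2) ∂_j (w w*)`; the last term integrates to zero, and what remains is
`P_j - ∂E/∂P_j = ∂H̄/∂P_j`.
-/


open MeasureTheory

noncomputable section

/-- `ℝⁿ` with the Euclidean inner product. -/
abbrev En (n : ℕ) := EuclideanSpace ℝ (Fin n)

/-- The integer vector `k` viewed as a point of `ℝⁿ`. -/
def intVec {n : ℕ} (k : Fin n → ℤ) : En n :=
  (EuclideanSpace.equiv (Fin n) ℝ).symm (fun i => (k i : ℝ))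

/-- `ℤⁿ`-periodicity for scalar functions on `ℝⁿ`. -/
def IsPeriodic {n : ℕ} (f : En n → ℝ) : Prop :=
  ∀ (x : En n) (k : Fin n → ℤ), f (x + intVec k) = f x

/-- `ℤⁿ`-periodicity for vector fields on `ℝⁿ`. -/
def IsPeriodicV {n : ℕ} (F : En n → En n) : Prop :=
  ∀ (x : En n) (k : Fin n → ℤ), F (x + intVec k) = F x

/-- The unit cube `[0,1]ⁿ`, the fundamental domain of the torus. -/
def unitCube (n : ℕ) : Set (En n) := {x | ∀ i, x i ∈ Set.Icc (0:ℝ) 1}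

/-- Euclidean dot product. -/
def dot {n : ℕ} (x y : En n) : ℝ := ∑ i, x i * y i

/-- Partial derivative in the `i`-th coordinate direction. -/
def pd {n : ℕ} (i : Fin n) (f : En n → ℝ) (x : En n) : ℝ :=
  fderiv ℝ f x (EuclideanSpace.single i 1)

/-- The Laplacian of a scalar function. -/
def lap {n : ℕ} (f : En n → ℝ) (x : En n) : ℝ :=
  ∑ i, pd i (fun y => pd i f y) x

/-- The divergence of a vector field. -/
def dvg {n : ℕ} (F : En n → En n) (x : En n) : ℝ :=
  ∑ i, fderiv ℝ (fun y => F y i) x (EuclideanSpace.single i 1)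

theorem isCompact_unitCube (n : ℕ) : IsCompact (unitCube n) := by
  have h : unitCube n = (EuclideanSpace.equiv (Fin n) ℝ) ⁻¹' (Set.Icc 0 1) := by
    ext x
    simp only [unitCube, Set.mem_ofPred_eq, Set.mem_preimage, Set.mem_Icc, Pi.le_def]
    exact forall_and
  rw [h]
  exact (EuclideanSpace.equiv (Fin n) ℝ).toHomeomorph.isCompact_preimage.2 isCompact_Icc

theorem integrableOn_unitCube {n : ℕ} {F : Type*} [NormedAddCommGroup F] {f : En n → F}
    (hf : Continuous f) : IntegrableOn f (unitCube n) :=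
  hf.continuousOn.integrableOn_compact (isCompact_unitCube n)

theorem gradient_apply {n : ℕ} (f : En n → ℝ) (x : En n) (i : Fin n) :
    gradient f x i = pd i f x := by
  have h := inner_gradient_left (𝕜 := ℝ) (f := f) (x := x) (y := EuclideanSpace.single i (1:ℝ))
  rw [EuclideanSpace.inner_single_right] at h
  simpa [pd] using h

theorem continuous_gradient {n : ℕ} {f : En n → ℝ} (hf : ContDiff ℝ 1 f) :
    Continuous (gradient f) :=
  (InnerProductSpace.toDual ℝ (En n)).symm.continuous.comp (hf.continuous_fderiv one_ne_zero)

theorem continuous_pd {n : ℕ} {f : En n → ℝ} (hf : ContDiff ℝ 1 f) (i : Fin n) :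
    Continuous (pd i f) :=
  (hf.continuous_fderiv one_ne_zero).clm_apply continuous_const

theorem contDiff_pd {n : ℕ} {f : En n → ℝ} (hf : ContDiff ℝ 2 f) (i : Fin n) :
    ContDiff ℝ 1 (pd i f) :=
  (hf.fderiv_right (m := 1) (by norm_num)).clm_apply contDiff_const

theorem IsPeriodic.pd {n : ℕ} {f : En n → ℝ} (hf : IsPeriodic f) (i : Fin n) :
    IsPeriodic (pd i f) := by
  intro x k
  have h : (fun y => f (y + intVec k)) = f := funext fun y => hf y k
  have h2 := fderiv_comp_add_right (𝕜 := ℝ) (f := f) (x := x) (intVec k)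
  rw [h] at h2
  simp only [_root_.pd, h2]

theorem pd_mul {n : ℕ} {f g : En n → ℝ} (hf : ContDiff ℝ 1 f) (hg : ContDiff ℝ 1 g)
    (i : Fin n) (x : En n) :
    pd i (fun y => f y * g y) x = f x * pd i g x + g x * pd i f x := by
  have h := (hf.differentiable one_ne_zero x).hasFDerivAt.mul
    (hg.differentiable one_ne_zero x).hasFDerivAt
  simp only [pd]
  erw [h.fderiv]
  simp

/-- The divergence of a periodic field integrates to zero over the unit cube: by the divergence
theorem only face integrals remain, and those of opposite faces cancel. -/
theorem integral_div_eq_zero {n : ℕ} (f : Fin n → En n → ℝ)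
    (hf : ∀ i, ContDiff ℝ 1 (f i)) (hper : ∀ i, IsPeriodic (f i)) :
    ∫ x in unitCube n, ∑ i, pd i (f i) x = 0 := by
  cases n with
  | zero => simp
  | succ n =>
    let L := (EuclideanSpace.equiv (Fin (n + 1)) ℝ).symm
    have hmp : MeasurePreserving (WithLp.toLp 2 : (Fin (n + 1) → ℝ) → En (n + 1)) :=
      PiLp.volume_preserving_toLp (Fin (n + 1))
    have hemb : MeasurableEmbedding (WithLp.toLp 2 : (Fin (n + 1) → ℝ) → En (n + 1)) :=
      (MeasurableEquiv.toLp 2 (Fin (n + 1) → ℝ)).measurableEmbedding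
    have hpre : (WithLp.toLp 2 : (Fin (n + 1) → ℝ) → En (n + 1)) ⁻¹' unitCube (n + 1)
        = Set.Icc 0 1 := by
      ext x
      simp only [unitCube, Set.mem_ofPred_eq, Set.mem_preimage, Set.mem_Icc, Pi.le_def]
      exact forall_and
    rw [← hmp.setIntegral_preimage_emb hemb, hpre]
    have hcont : Continuous fun x : Fin (n + 1) → ℝ => ∑ i, pd i (f i) (L x) :=
      continuous_finsetSum _ fun i _ => (continuous_pd (hf i) i).comp L.continuous
    have hL : ∀ i : Fin (n + 1), L (Pi.single i 1) = EuclideanSpace.single i 1 := by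
      intro i; rfl
    have key := integral_divergence_of_hasFDerivAt_off_countable' (E := ℝ)
      (0 : Fin (n + 1) → ℝ) 1 zero_le_one (fun i x => f i (L x))
      (fun i x => (fderiv ℝ (f i) (L x)).comp (L : (Fin (n + 1) → ℝ) →L[ℝ] En (n + 1)))
      ∅ Set.countable_empty
      (fun i => ((hf i).continuous.comp L.continuous).continuousOn)
      (fun x _ i => ((hf i).differentiable one_ne_zero (L x)).hasFDerivAt.comp x L.hasFDerivAt)
      (by
        have := hcont.continuousOn.integrableOn_compact (μ := volume)
          (isCompact_Icc (a := (0 : Fin (n + 1) → ℝ)) (b := 1))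
        exact this)
    refine Eq.trans ?_ (key.trans ?_)
    · rfl
    · refine Finset.sum_eq_zero fun i _ => ?_
      rw [sub_eq_zero]
      congr 1
      ext x
      -- the front face is the back face translated by the `i`-th basis vector
      have : L (Fin.insertNth i ((1 : Fin (n + 1) → ℝ) i) x)
          = L (Fin.insertNth i ((0 : Fin (n + 1) → ℝ) i) x) + intVec (Pi.single i 1) := by
        ext j
        change (Fin.insertNth i ((1 : Fin (n + 1) → ℝ) i) x : Fin (n + 1) → ℝ) j
          = (Fin.insertNth i ((0 : Fin (n + 1) → ℝ) i) x : Fin (n + 1) → ℝ) j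
            + ((Pi.single i (1 : ℤ) : Fin (n + 1) → ℤ) j : ℝ)
        refine Fin.succAboveCases i ?_ (fun m => ?_) j
        · simp
        · simp
      simp only [this, hper i _ _]

theorem integral_pd_eq_zero {n : ℕ} {f : En n → ℝ} (hf : ContDiff ℝ 1 f) (hper : IsPeriodic f)
    (j : Fin n) : ∫ x in unitCube n, pd j f x = 0 := by
  have h := integral_div_eq_zero (fun i => if i = j then f else fun _ => 0)
    (fun i => by split_ifs; exacts [hf, contDiff_const])
    (fun i => by split_ifs; exacts [hper, fun _ _ => rfl])
  rw [← h]
  congr 1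
  ext x
  rw [Finset.sum_eq_single j]
  · simp
  · intro i _ hi
    simp [hi, pd]
  · simp

theorem dot_gradient {n : ℕ} (P : En n) (f : En n → ℝ) (x : En n) :
    dot P (gradient f x) = ∑ i, P i * pd i f x := by
  simp only [dot, gradient_apply]

/-- Exact comparison of two eigenvalues: `f` is an eigenfunction of the operator with parameter
`Q` and eigenvalue `a`, `g` one of the adjoint operator with parameter `P` and eigenvalue `b`. -/
theorem eigenvalue_difference {n : ℕ} {hbar : ℝ} {W f g : En n → ℝ} {P Q : En n} {a b : ℝ}
    (hf : ContDiff ℝ 2 f) (hg : ContDiff ℝ 2 g) (hfper : IsPeriodic f) (hgper : IsPeriodic g)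
    (hfeq : ∀ x, -(hbar ^ 2 / 2) * lap f x + hbar * dot Q (gradient f x) + W x * f x = a * f x)
    (hgeq : ∀ x, -(hbar ^ 2 / 2) * lap g x - hbar * dot P (gradient g x) + W x * g x = b * g x) :
    (a - b) * ∫ x in unitCube n, f x * g x
      = hbar * ∫ x in unitCube n, g x * ∑ i, (Q i - P i) * pd i f x := by
  have hf1 : ContDiff ℝ 1 f := hf.of_le one_le_two
  have hg1 : ContDiff ℝ 1 g := hg.of_le one_le_two
  -- the flux whose divergence is `g L_P f - f L_P^* g`
  let F : Fin n → En n → ℝ := fun i x =>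
    -(hbar ^ 2 / 2) * (g x * pd i f x - f x * pd i g x) + hbar * P i * (f x * g x)
  have hF : ∀ i, ContDiff ℝ 1 (F i) := fun i =>
    (contDiff_const.mul ((hg1.mul (contDiff_pd hf i)).sub (hf1.mul (contDiff_pd hg i)))).add
      (contDiff_const.mul (hf1.mul hg1))
  have hFper : ∀ i, IsPeriodic (F i) := fun i x k => by
    simp only [F, hfper x k, hgper x k, hfper.pd i x k, hgper.pd i x k]
  have hpdF : ∀ i x, pd i (F i) x
      = -(hbar ^ 2 / 2) * (g x * pd i (fun y => pd i f y) x - f x * pd i (fun y => pd i g y) x)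
        + hbar * (P i * (f x * pd i g x + g x * pd i f x)) := by
    intro i x
    have d : ∀ {φ : En n → ℝ}, ContDiff ℝ 1 φ → HasFDerivAt φ (fderiv ℝ φ x) x :=
      fun h => (h.differentiable one_ne_zero x).hasFDerivAt
    have h := ((((d hg1).mul (d (contDiff_pd hf i))).sub
      ((d hf1).mul (d (contDiff_pd hg i)))).const_mul (-(hbar ^ 2 / 2))).add
      (((d hf1).mul (d hg1)).const_mul (hbar * P i))
    have h' : pd i (F i) x = _ := congrArg (fun T => T (EuclideanSpace.single i 1)) h.fderiv
    rw [h']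
    change _ = -(hbar ^ 2 / 2) * (g x * fderiv ℝ (pd i f) x (EuclideanSpace.single i 1)
      - f x * fderiv ℝ (pd i g) x (EuclideanSpace.single i 1)) + _
    simp [pd]
    ring
  have hpt : ∀ x, (a - b) * (f x * g x)
      = hbar * (g x * ∑ i, (Q i - P i) * pd i f x) + ∑ i, pd i (F i) x := by
    intro x
    have h1 := hfeq x
    have h2 := hgeq x
    rw [dot_gradient] at h1 h2
    simp only [hpdF, mul_add, sub_mul, mul_sub, Finset.sum_add_distrib, Finset.sum_sub_distrib]
    have e1 : ∀ (c : ℝ) (h k : En n → ℝ), ∑ i, c * (h x * pd i (fun y => pd i k y) x)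
        = c * (h x * lap k x) := fun c h k => by simp only [lap, Finset.mul_sum]
    have e2 : ∀ h k : En n → ℝ, ∑ i, hbar * (P i * (h x * pd i k x))
        = hbar * (h x * ∑ i, P i * pd i k x) := fun h k => by
      simp only [Finset.mul_sum]
      exact Finset.sum_congr rfl fun i _ => by ring
    rw [e1, e1, e2, e2]
    linear_combination (-g x) * h1 + f x * h2
  have c1 : Continuous fun x => hbar * (g x * ∑ i, (Q i - P i) * pd i f x) :=
    continuous_const.mul (hg.continuous.mul
      (continuous_finsetSum _ fun i _ => continuous_const.mul (continuous_pd hf1 i)))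
  have c2 : Continuous fun x => ∑ i, pd i (F i) x :=
    continuous_finsetSum _ fun i _ => continuous_pd (hF i) i
  rw [← integral_const_mul, ← integral_const_mul]
  simp only [hpt]
  rw [integral_add (integrableOn_unitCube c1) (integrableOn_unitCube c2),
    integral_div_eq_zero F hF hFper, add_zero]

/-- The partial `x`-derivatives of a jointly smooth family are jointly continuous. -/
theorem continuous_pd_param {n : ℕ} {w : En n → En n → ℝ}
    (hw : ContDiff ℝ 1 (fun p : En n × En n => w p.1 p.2)) (j : Fin n) :
    Continuous fun p : En n × En n => pd j (w p.1) p.2 := by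
  have h : (fun p : En n × En n => pd j (w p.1) p.2) = fun p =>
      fderiv ℝ (fun p : En n × En n => w p.1 p.2) p (0, EuclideanSpace.single j 1) := by
    ext ⟨Q, x⟩
    have h1 := (hw.differentiable one_ne_zero (Q, x)).hasFDerivAt.comp x
      (hasFDerivAt_prodMk_right (𝕜 := ℝ) Q x)
    have h2 : pd j (w Q) x = _ := congrArg (fun T => T (EuclideanSpace.single j 1)) h1.fderiv
    rw [h2]
    simp
  rw [h]
  exact (hw.continuous_fderiv one_ne_zero).clm_apply continuous_const

/-- The perturbation formula `∂E/∂P_j = ħ ∫ w* ∂_j w`, where `g` is the adjoint eigenfunction `w*`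
at the fixed parameter `P`. -/
theorem pd_eigenvalue {n : ℕ} {hbar : ℝ} {W : En n → ℝ} {w : En n → En n → ℝ} {E : En n → ℝ}
    {g : En n → ℝ} {P : En n}
    (hw : ContDiff ℝ 2 (fun p : En n × En n => w p.1 p.2)) (hg : ContDiff ℝ 2 g)
    (hE : DifferentiableAt ℝ E P) (hwper : ∀ Q, IsPeriodic (w Q)) (hgper : IsPeriodic g)
    (heigw : ∀ Q x, -(hbar ^ 2 / 2) * lap (w Q) x + hbar * dot Q (gradient (w Q) x)
      + W x * w Q x = E Q * w Q x)
    (hgeq : ∀ x, -(hbar ^ 2 / 2) * lap g x - hbar * dot P (gradient g x) + W x * g x = E P * g x)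
    (hnorm : ∫ x in unitCube n, w P x * g x = 1) (j : Fin n) :
    pd j E P = hbar * ∫ x in unitCube n, g x * pd j (w P) x := by
  let e : En n := EuclideanSpace.single j 1
  have hline : Continuous fun p : ℝ × En n => (P + p.1 • e, p.2) := by fun_prop
  have ha : Continuous fun t : ℝ => ∫ x in unitCube n, w (P + t • e) x * g x :=
    continuous_parametric_integral_of_continuous
      ((hw.continuous.comp hline).mul (hg.continuous.comp continuous_snd)) (isCompact_unitCube n)
  have hb : Continuous fun t : ℝ => ∫ x in unitCube n, g x * pd j (w (P + t • e)) x :=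
    continuous_parametric_integral_of_continuous
      ((hg.continuous.comp continuous_snd).mul
        ((continuous_pd_param (hw.of_le one_le_two) j).comp hline)) (isCompact_unitCube n)
  have hslice : ∀ Q, ContDiff ℝ 2 (w Q) := fun Q => hw.comp (contDiff_prodMk_right Q)
  have hdiff : ∀ t : ℝ, (E (P + t • e) - E P) * ∫ x in unitCube n, w (P + t • e) x * g x
      = t * (hbar * ∫ x in unitCube n, g x * pd j (w (P + t • e)) x) := by
    intro t
    rw [eigenvalue_difference (hslice _) hg (hwper _) hgper (heigw _) hgeq, mul_left_comm,
      ← integral_const_mul t]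
    congr 2
    ext x
    rw [Finset.sum_eq_single j]
    · simp [e]
      ring
    · intro i _ hi
      simp [e, hi]
    · simp
  have hder : HasDerivAt (fun t : ℝ => E (P + t • e)) (pd j E P) 0 :=
    hE.hasFDerivAt.hasLineDerivAt e
  have hslope := hder.tendsto_slope_zero
  have hlim1 := hslope.mul (ha.tendsto 0 |>.mono_left (nhdsWithin_le_nhds (s := {0}ᶜ)))
  have hlim2 := (hb.tendsto 0 |>.mono_left (nhdsWithin_le_nhds (s := {0}ᶜ))).const_mul hbar
  simp only [zero_smul, add_zero, zero_add, hnorm, mul_one] at hlim1 hlim2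
  refine tendsto_nhds_unique (hlim1.congr' ?_) hlim2
  filter_upwards [self_mem_nhdsWithin] with t ht
  have ht' : t ≠ 0 := ht
  rw [smul_eq_mul, mul_assoc, hdiff t, inv_mul_cancel_left₀ ht']

theorem dot_eq_inner {n : ℕ} (x y : En n) : dot x y = inner ℝ x y := by
  simp [dot, PiLp.inner_apply, mul_comm]

/-- Theorem 5.3(i), equation (5.9):
`∇_P H̄(P) = ∫ Du dσ` for the effective Hamiltonian `H̄(P) = |P|²/2 − E(P)`. -/
theorem gradient_effective_hamiltonian {n : ℕ} (hbar : ℝ) (h_hbar : 0 < hbar)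
    (W : En n → ℝ) (hW : ContDiff ℝ (⊤ : ℕ∞) W) (hWper : IsPeriodic W)
    (w wstar : En n → En n → ℝ) (E : En n → ℝ)
    (hw : ContDiff ℝ (⊤ : ℕ∞) (fun p : En n × En n => w p.1 p.2))
    (hwstar : ContDiff ℝ (⊤ : ℕ∞) (fun p : En n × En n => wstar p.1 p.2))
    (hE : ContDiff ℝ (⊤ : ℕ∞) E)
    (hwpos : ∀ P x, 0 < w P x) (hwstarpos : ∀ P x, 0 < wstar P x)
    (hwper : ∀ P, IsPeriodic (w P)) (hwstarper : ∀ P, IsPeriodic (wstar P))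
    (heigw : ∀ P x, -(hbar ^ 2 / 2) * lap (w P) x + hbar * dot P (gradient (w P) x)
      + W x * w P x = E P * w P x)
    (heigwstar : ∀ P x, -(hbar ^ 2 / 2) * lap (wstar P) x
      - hbar * dot P (gradient (wstar P) x) + W x * wstar P x = E P * wstar P x)
    (hnorm : ∀ P, (∫ x in unitCube n, w P x * wstar P x) = 1)
    (u : En n → En n → ℝ)
    (hu : u = fun P x => dot P x
      + (-(hbar * Real.log (w P x)) + hbar * Real.log (wstar P x)) / 2)
    (Hbar : En n → ℝ) (hHbar : Hbar = fun P => dot P P / 2 - E P) :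
    ∀ P, gradient Hbar P
      = ∫ x in unitCube n, (w P x * wstar P x) • gradient (u P) x := by
  intro P
  have le2 : (2 : WithTop ℕ∞) ≤ ((⊤ : ℕ∞) : WithTop ℕ∞) := WithTop.coe_le_coe.2 le_top
  have hw2 := hw.of_le le2
  have hws2 := hwstar.of_le le2
  have hf : ContDiff ℝ 2 (w P) := hw2.comp (contDiff_prodMk_right P)
  have hg : ContDiff ℝ 2 (wstar P) := hws2.comp (contDiff_prodMk_right P)
  have hf1 : ContDiff ℝ 1 (w P) := hf.of_le one_le_two
  have hg1 : ContDiff ℝ 1 (wstar P) := hg.of_le one_le_two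
  have hEd : DifferentiableAt ℝ E P := (hE.of_le le2).differentiable two_ne_zero P
  have hu1 : ContDiff ℝ 1 (u P) := by
    have h1 : ContDiff ℝ 1 fun x : En n => dot P x := by
      simp only [dot_eq_inner]
      exact contDiff_const.inner ℝ contDiff_id
    rw [hu]
    exact h1.add (((contDiff_const.mul (hf1.log fun x => (hwpos P x).ne')).neg.add
      (contDiff_const.mul (hg1.log fun x => (hwstarpos P x).ne'))).div_const 2)
  have hσu : Continuous fun x => (w P x * wstar P x) • gradient (u P) x :=
    (hf.continuous.mul hg.continuous).smul (continuous_gradient hu1)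
  ext j
  have hproj : (∫ x in unitCube n, (w P x * wstar P x) • gradient (u P) x) j
      = ∫ x in unitCube n, ((w P x * wstar P x) • gradient (u P) x) j :=
    ((EuclideanSpace.proj (𝕜 := ℝ) j).integral_comp_comm (integrableOn_unitCube hσu)).symm
  have hH : pd j Hbar P = P j - pd j E P := by
    have h1 := (((hasStrictFDerivAt_norm_sq P).hasFDerivAt.const_mul (1 / 2)).sub
      hEd.hasFDerivAt)
    have h2 : Hbar = fun Q => 1 / 2 * ‖Q‖ ^ 2 - E Q := by
      rw [hHbar]
      ext Q
      rw [dot_eq_inner, real_inner_self_eq_norm_sq]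
      ring
    have h3 : pd j Hbar P = _ := (congrArg (fun φ => pd j φ P) h2).trans
      (congrArg (fun T => T (EuclideanSpace.single j 1)) h1.fderiv)
    rw [h3]
    simp [pd, EuclideanSpace.inner_single_right]
  have hpdu : ∀ x, pd j (u P) x
      = P j + (-(hbar * (pd j (w P) x / w P x)) + hbar * (pd j (wstar P) x / wstar P x)) / 2 := by
    intro x
    have d : ∀ {φ : En n → ℝ}, ContDiff ℝ 1 φ → HasFDerivAt φ (fderiv ℝ φ x) x :=
      fun h => (h.differentiable one_ne_zero x).hasFDerivAt
    have h1 := (innerSL ℝ P).hasFDerivAt (x := x) |>.add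
      (((((d hf1).log (hwpos P x).ne').const_mul hbar).neg.add
        (((d hg1).log (hwstarpos P x).ne').const_mul hbar)).const_mul (1 / 2))
    have h2 : u P = fun x => innerSL ℝ P x + 1 / 2 *
        (-(hbar * Real.log (w P x)) + hbar * Real.log (wstar P x)) := by
      rw [hu]
      ext y
      simp only [dot_eq_inner, innerSL_apply_apply]
      ring
    have h3 : pd j (u P) x = _ := (congrArg (fun φ => pd j φ x) h2).trans
      (congrArg (fun T => T (EuclideanSpace.single j 1)) h1.fderiv)
    rw [h3]
    simp [pd, EuclideanSpace.inner_single_right]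
    ring
  have hpt : ∀ x, ((w P x * wstar P x) • gradient (u P) x) j
      = (P j * (w P x * wstar P x) - hbar * (wstar P x * pd j (w P) x))
        + hbar / 2 * pd j (fun y => w P y * wstar P y) x := by
    intro x
    have h1 := (hwpos P x).ne'
    have h2 := (hwstarpos P x).ne'
    rw [PiLp.smul_apply, smul_eq_mul, gradient_apply, hpdu, pd_mul hf1 hg1]
    field_simp
    ring
  have cσ : Continuous fun x => P j * (w P x * wstar P x) :=
    continuous_const.mul (hf.continuous.mul hg.continuous)
  have cb : Continuous fun x => hbar * (wstar P x * pd j (w P) x) :=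
    continuous_const.mul (hg.continuous.mul (continuous_pd hf1 j))
  have cd : Continuous fun x => hbar / 2 * pd j (fun y => w P y * wstar P y) x :=
    continuous_const.mul (continuous_pd (hf1.mul hg1) j)
  have hper : IsPeriodic fun y => w P y * wstar P y := fun x k => by
    simp only [hwper P x k, hwstarper P x k]
  rw [gradient_apply, hH, hproj,
    pd_eigenvalue hw2 hg hEd hwper (hwstarper P) heigw (heigwstar P) (hnorm P) j]
  simp only [hpt]
  rw [integral_add (f := fun x => P j * (w P x * wstar P x) - hbar * (wstar P x * pd j (w P) x))
      (integrableOn_unitCube (cσ.sub cb)) (integrableOn_unitCube cd),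
    integral_sub (integrableOn_unitCube cσ) (integrableOn_unitCube cb),
    integral_const_mul, integral_const_mul, integral_const_mul, hnorm,
    integral_pd_eq_zero (hf1.mul hg1) hper]
  ring
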